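/- Let λ = (λ_2, λ_1) ∈ ℤ² with λ_2 ≥ λ_1 ≥ 0. Then the Kostka–Foulkes polynomial of type B_2 with second weight zero satisfies: (a) if λ_2 + λ_1 is even, K^{B_2}_{λ,0}(q) = q^{λ_2} · ( (q^{2λ_1+2} − 1)/(q² − 1) + q² · ((q^{2λ_1+1} − 1)/(q − 1)) · ((q^{λ_2−λ_1} − 1)/(q² − 1)) ); (b) if λ_2 + λ_1 is odd, K^{B_2}_{λ,0}(q) = q^{λ_2+1} · ((q^{2λ_1+1} − 1)/(q − 1)) · ((q^{λ_2−λ_1+1} − 1)/(q² − 1)). (Every displayed quotient is a polynomial: (q^{2a} − 1)/(q² − 1) = 1 + q² + … + q^{2a−2} and (q^{a} − 1)/(q − 1) = 1 + q + … + q^{a−1}; note λ_2 − λ_1 is even in case (a) and odd in case (b).) -/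

import Mathlib

open scoped BigOperators

noncomputable section

/-- The `q`-analogue of Kostant's partition function attached to the finite set `R`
of positive roots: the coefficient of `q^k` is the number of families
`(m_α)_{α ∈ R}` of nonnegative integers with `∑ m_α = k` and `∑ m_α • α = β`. -/
def kostantQ {n : ℕ} (R : Finset (Fin n → ℚ)) (β : Fin n → ℚ) : PowerSeries ℤ :=
  PowerSeries.mk fun k =>
    (Nat.card {m : {α // α ∈ R} → ℕ //
      (∑ α, m α) = k ∧ (∑ α, (m α : ℚ) • (α : Fin n → ℚ)) = β} : ℤ)

/-- Positive roots of type `D_n` : `e_i - e_j` and `e_i + e_j` for `j < i`. -/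
def rootsD (n : ℕ) : Finset (Fin n → ℚ) :=
  ((Finset.univ : Finset (Fin n × Fin n)).filter fun p => p.2 < p.1).image
      (fun p => Pi.single p.1 (1 : ℚ) - Pi.single p.2 1) ∪
  ((Finset.univ : Finset (Fin n × Fin n)).filter fun p => p.2 < p.1).image
      (fun p => Pi.single p.1 (1 : ℚ) + Pi.single p.2 1)

/-- Positive roots of type `B_n`. -/
def rootsB (n : ℕ) : Finset (Fin n → ℚ) :=
  rootsD n ∪ (Finset.univ : Finset (Fin n)).image fun i => Pi.single i (1 : ℚ)

/-- Positive roots of type `C_n`. -/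
def rootsC (n : ℕ) : Finset (Fin n → ℚ) :=
  rootsD n ∪ (Finset.univ : Finset (Fin n)).image fun i => Pi.single i (2 : ℚ)

/-- Positive roots of type `A_{n-1}` : `e_i - e_j` for `j < i`. -/
def rootsA (n : ℕ) : Finset (Fin n → ℚ) :=
  ((Finset.univ : Finset (Fin n × Fin n)).filter fun p => p.2 < p.1).image
      fun p => Pi.single p.1 (1 : ℚ) - Pi.single p.2 1

/-- `ρ` of type `B_n` : `e_i`-coordinate `i - 1/2` (`0`-based index `i ↦ i + 1/2`). -/
def rhoB (n : ℕ) : Fin n → ℚ := fun i => ((i : ℕ) : ℚ) + 1/2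

/-- `ρ` of type `C_n` : `e_i`-coordinate `i`. -/
def rhoC (n : ℕ) : Fin n → ℚ := fun i => ((i : ℕ) : ℚ) + 1

/-- `ρ` of type `D_n` : `e_i`-coordinate `i - 1`. -/
def rhoD (n : ℕ) : Fin n → ℚ := fun i => ((i : ℕ) : ℚ)

/-- `ρ` of type `A_{n-1}` : `e_i`-coordinate `i - 1`. -/
def rhoA (n : ℕ) : Fin n → ℚ := fun i => ((i : ℕ) : ℚ)

/-- The signed permutation `(σ, ε)` acting on a weight: it maps `e_j` to `± e_{σ j}`. -/
def wAct {n : ℕ} (σ : Equiv.Perm (Fin n)) (ε : Fin n → Bool) (β : Fin n → ℚ) :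
    Fin n → ℚ := fun i => (if ε i then -1 else 1) * β (σ⁻¹ i)

/-- The determinant (sign) of the signed permutation `(σ, ε)`. -/
def wDet {n : ℕ} (σ : Equiv.Perm (Fin n)) (ε : Fin n → Bool) : ℤ :=
  (Equiv.Perm.sign σ : ℤ) * ∏ i, (if ε i then (-1 : ℤ) else 1)

/-- Kostka-Foulkes polynomial of type `B_n`, as a power series in `q`. -/
def KB (n : ℕ) (lam mu : Fin n → ℚ) : PowerSeries ℤ :=
  ∑ σ : Equiv.Perm (Fin n), ∑ ε : Fin n → Bool,
    wDet σ ε • kostantQ (rootsB n) (wAct σ ε (lam + rhoB n) - (mu + rhoB n))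

/-- Kostka-Foulkes polynomial of type `C_n`, as a power series in `q`. -/
def KC (n : ℕ) (lam mu : Fin n → ℚ) : PowerSeries ℤ :=
  ∑ σ : Equiv.Perm (Fin n), ∑ ε : Fin n → Bool,
    wDet σ ε • kostantQ (rootsC n) (wAct σ ε (lam + rhoC n) - (mu + rhoC n))

/-- Kostka-Foulkes polynomial of type `D_n`, as a power series in `q` (the Weyl group
consists of the signed permutations with an even number of sign changes). -/
def KD (n : ℕ) (lam mu : Fin n → ℚ) : PowerSeries ℤ :=
  ∑ σ : Equiv.Perm (Fin n), ∑ ε : Fin n → Bool,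
    if (∏ i, (if ε i then (-1 : ℤ) else 1)) = 1 then
      wDet σ ε • kostantQ (rootsD n) (wAct σ ε (lam + rhoD n) - (mu + rhoD n))
    else 0

/-- Kostka-Foulkes polynomial of type `A_{n-1}`, as a power series in `q`. -/
def KA (n : ℕ) (lam mu : Fin n → ℚ) : PowerSeries ℤ :=
  ∑ σ : Equiv.Perm (Fin n),
    (Equiv.Perm.sign σ : ℤ) •
      kostantQ (rootsA n) ((fun i => (lam + rhoA n) (σ⁻¹ i)) - (mu + rhoA n))

/-- Dominant weight of type `B_n` : `λ_n ≥ ⋯ ≥ λ_1 ≥ 0`, all coordinates in `ℤ`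
or all in `ℤ + 1/2`. -/
def DominantB {n : ℕ} (lam : Fin n → ℚ) : Prop :=
  Monotone lam ∧ (∀ i, 0 ≤ lam i) ∧
    ((∀ i, ∃ z : ℤ, lam i = z) ∨ (∀ i, ∃ z : ℤ, lam i = z + 1/2))

/-- Dominant weight of type `C_n` : `λ_n ≥ ⋯ ≥ λ_1 ≥ 0`, integer coordinates. -/
def DominantC {n : ℕ} (lam : Fin n → ℚ) : Prop :=
  Monotone lam ∧ (∀ i, 0 ≤ lam i) ∧ ∀ i, ∃ z : ℤ, lam i = z

/-- Dominant weight of type `D_n` : `λ_n ≥ ⋯ ≥ λ_2 ≥ |λ_1|`, all coordinates in `ℤ`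
or all in `ℤ + 1/2`. -/
def DominantD {n : ℕ} (lam : Fin n → ℚ) : Prop :=
  (∀ i j : Fin n, i ≤ j → 0 < (i : ℕ) → lam i ≤ lam j) ∧
  (∀ h : 0 < n, ∀ j : Fin n, 0 < (j : ℕ) → |lam ⟨0, h⟩| ≤ lam j) ∧
  ((∀ i, ∃ z : ℤ, lam i = z) ∨ (∀ i, ∃ z : ℤ, lam i = z + 1/2))

/-- Restriction of a weight of rank `n` to the first `n - 1` coordinates
(i.e. forgetting the `e_n`-coordinate). -/
def restrict1 {n : ℕ} (lam : Fin n → ℚ) : Fin (n - 1) → ℚ :=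
  fun i => lam ⟨(i : ℕ), by have := i.2; omega⟩

/-- Pieri number `b^λ_{γ,r}` of type `B_n`. -/
def bPieri {m : ℕ} (γ lam : Fin m → ℚ) (r : ℕ) : ℕ :=
  Nat.card {t : (Fin m → ℕ) × (Fin m → ℕ) × Bool //
    ((cond t.2.2 1 0) + ∑ i, (t.1 i + t.2.1 i)) = r ∧
    (∀ i, ((t.2.1 i : ℚ) - (t.1 i : ℚ)) = lam i - γ i) ∧
    (∀ i : Fin m, ∀ h : (i : ℕ) + 1 < m,
      lam i ≤ lam ⟨(i : ℕ) + 1, h⟩ - (t.2.1 ⟨(i : ℕ) + 1, h⟩ : ℚ)) ∧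
    (∀ i : Fin m, ∀ h : (i : ℕ) + 1 < m,
      lam i + (t.1 i : ℚ) - (t.2.1 i : ℚ) ≤
        lam ⟨(i : ℕ) + 1, h⟩ - (t.2.1 ⟨(i : ℕ) + 1, h⟩ : ℚ)) ∧
    (∀ h : 0 < m,
      if t.2.2 then (0 : ℚ) < lam ⟨0, h⟩ - (t.2.1 ⟨0, h⟩ : ℚ)
      else (0 : ℚ) ≤ lam ⟨0, h⟩ - (t.2.1 ⟨0, h⟩ : ℚ))}

/-- Pieri number `c^λ_{γ,r}` of type `C_n`. -/
def cPieri {m : ℕ} (γ lam : Fin m → ℚ) (r : ℕ) : ℕ :=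
  Nat.card {t : (Fin m → ℕ) × (Fin m → ℕ) //
    (∑ i, (t.1 i + t.2 i)) = r ∧
    (∀ i, ((t.2 i : ℚ) - (t.1 i : ℚ)) = lam i - γ i) ∧
    (∀ i : Fin m, ∀ h : (i : ℕ) + 1 < m,
      lam i ≤ lam ⟨(i : ℕ) + 1, h⟩ - (t.2 ⟨(i : ℕ) + 1, h⟩ : ℚ)) ∧
    (∀ i : Fin m, ∀ h : (i : ℕ) + 1 < m,
      lam i + (t.1 i : ℚ) - (t.2 i : ℚ) ≤
        lam ⟨(i : ℕ) + 1, h⟩ - (t.2 ⟨(i : ℕ) + 1, h⟩ : ℚ)) ∧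
    (∀ h : 0 < m, (0 : ℚ) ≤ lam ⟨0, h⟩ - (t.2 ⟨0, h⟩ : ℚ))}

/-- Pieri number `d^λ_{γ,r}` of type `D_n`. -/
def dPieri {m : ℕ} (γ lam : Fin m → ℚ) (r : ℕ) : ℕ :=
  Nat.card {t : (Fin m → ℕ) × (Fin m → ℕ) //
    (∀ h : 0 < m, min (t.1 ⟨0, h⟩) (t.2 ⟨0, h⟩) = 0) ∧
    (∑ i, (t.1 i + t.2 i)) = r ∧
    (∀ i, ((t.2 i : ℚ) - (t.1 i : ℚ)) = lam i - γ i) ∧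
    (∀ h : 1 < m,
      (t.1 ⟨0, by omega⟩ = 0 →
        lam ⟨0, by omega⟩ ≤ lam ⟨1, h⟩ - (t.2 ⟨1, h⟩ : ℚ)) ∧
      (0 < t.1 ⟨0, by omega⟩ →
        -lam ⟨0, by omega⟩ ≤ lam ⟨1, h⟩ - (t.2 ⟨1, h⟩ : ℚ))) ∧
    (∀ i : Fin m, 1 ≤ (i : ℕ) → ∀ h : (i : ℕ) + 1 < m,
      lam i ≤ lam ⟨(i : ℕ) + 1, h⟩ - (t.2 ⟨(i : ℕ) + 1, h⟩ : ℚ)) ∧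
    (∀ i : Fin m, 1 ≤ (i : ℕ) → ∀ h : (i : ℕ) + 1 < m,
      lam i + (t.1 i : ℚ) - (t.2 i : ℚ) ≤
        lam ⟨(i : ℕ) + 1, h⟩ - (t.2 ⟨(i : ℕ) + 1, h⟩ : ℚ)) ∧
    (∀ h : 1 < m,
      (t.1 ⟨0, by omega⟩ = 0 → 0 ≤ γ ⟨0, by omega⟩ →
        lam ⟨0, by omega⟩ - (t.2 ⟨0, by omega⟩ : ℚ) ≤ lam ⟨1, h⟩ - (t.2 ⟨1, h⟩ : ℚ)) ∧
      (t.2 ⟨0, by omega⟩ = 0 → 0 ≤ γ ⟨0, by omega⟩ →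
        lam ⟨0, by omega⟩ + (t.1 ⟨0, by omega⟩ : ℚ) ≤ lam ⟨1, h⟩ - (t.2 ⟨1, h⟩ : ℚ)) ∧
      (t.2 ⟨0, by omega⟩ = 0 → γ ⟨0, by omega⟩ < 0 →
        -lam ⟨0, by omega⟩ - (t.1 ⟨0, by omega⟩ : ℚ) ≤ lam ⟨1, h⟩ - (t.2 ⟨1, h⟩ : ℚ)) ∧
      (t.1 ⟨0, by omega⟩ = 0 → γ ⟨0, by omega⟩ < 0 →
        -lam ⟨0, by omega⟩ + (t.2 ⟨0, by omega⟩ : ℚ) ≤ lam ⟨1, h⟩ - (t.2 ⟨1, h⟩ : ℚ)))}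

/-- The monomial `x^β = ∏ y_i ^ (2 β_i)` in the Laurent polynomial ring
`ℤ[y_1^{±1}, …, y_n^{±1}]`, realized as the group algebra of `ℤ^n`. -/
def xpow {n : ℕ} (β : Fin n → ℚ) : AddMonoidAlgebra ℤ (Fin n → ℤ) :=
  AddMonoidAlgebra.single (fun i => ⌊2 * β i⌋) 1

/-- The Weyl alternant `a_β = ∑_{σ ∈ W_{B_n}} det σ · x^{σ β}` of type `B_n`. -/
def altB {n : ℕ} (β : Fin n → ℚ) : AddMonoidAlgebra ℤ (Fin n → ℤ) :=
  ∑ σ : Equiv.Perm (Fin n), ∑ ε : Fin n → Bool, wDet σ ε • xpow (wAct σ ε β)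

/-- The Weyl alternant `a_β = ∑_{σ ∈ W_{D_n}} det σ · x^{σ β}` of type `D_n`. -/
def altD {n : ℕ} (β : Fin n → ℚ) : AddMonoidAlgebra ℤ (Fin n → ℤ) :=
  ∑ σ : Equiv.Perm (Fin n), ∑ ε : Fin n → Bool,
    if (∏ i, (if ε i then (-1 : ℤ) else 1)) = 1 then wDet σ ε • xpow (wAct σ ε β) else 0

end


lemma rootsB_two : rootsB 2 = {![-1,1], ![1,1], ![1,0], ![0,1]} := by
  have h : ((Finset.univ : Finset (Fin 2 × Fin 2)).filter fun p => p.2 < p.1) = {(1, 0)} := by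
    decide
  have hu : (Finset.univ : Finset (Fin 2)) = {0, 1} := by decide
  have h1 : (Pi.single 1 1 - Pi.single 0 1 : Fin 2 → ℚ) = ![-1, 1] := by
    ext i; fin_cases i <;> simp
  have h2 : (Pi.single 1 1 + Pi.single 0 1 : Fin 2 → ℚ) = ![1, 1] := by
    ext i; fin_cases i <;> simp
  have h3 : (Pi.single 0 1 : Fin 2 → ℚ) = ![1, 0] := by
    ext i; fin_cases i <;> simp
  have h4 : (Pi.single 1 1 : Fin 2 → ℚ) = ![0, 1] := by
    ext i; fin_cases i <;> simp
  rw [rootsB, rootsD, h, hu, Finset.image_singleton, Finset.image_singleton, Finset.image_insert,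
    Finset.image_singleton, h1, h2, h3, h4]
  rfl

def rr1 : {α // α ∈ rootsB 2} := ⟨![-1,1], by rw [rootsB_two]; simp⟩
def rr2 : {α // α ∈ rootsB 2} := ⟨![1,1], by rw [rootsB_two]; simp⟩
def rr3 : {α // α ∈ rootsB 2} := ⟨![1,0], by rw [rootsB_two]; simp⟩
def rr4 : {α // α ∈ rootsB 2} := ⟨![0,1], by rw [rootsB_two]; simp⟩

lemma rr_cases (α : {α // α ∈ rootsB 2}) : α = rr1 ∨ α = rr2 ∨ α = rr3 ∨ α = rr4 := by
  obtain ⟨α, h⟩ := α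
  have h' := h
  rw [rootsB_two] at h'
  simpa [rr1, rr2, rr3, rr4] using h'

lemma rr12 : rr1 ≠ rr2 := by decide
lemma rr13 : rr1 ≠ rr3 := by decide
lemma rr14 : rr1 ≠ rr4 := by decide
lemma rr23 : rr2 ≠ rr3 := by decide
lemma rr24 : rr2 ≠ rr4 := by decide
lemma rr34 : rr3 ≠ rr4 := by decide

lemma rr_sum {M : Type*} [AddCommMonoid M] (f : {α // α ∈ rootsB 2} → M) :
    ∑ α, f α = f rr1 + (f rr2 + (f rr3 + f rr4)) := by
  have : (Finset.univ : Finset {α // α ∈ rootsB 2}) = {rr1, rr2, rr3, rr4} := by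
    ext α
    simpa using rr_cases α
  rw [this, Finset.sum_insert, Finset.sum_insert, Finset.sum_insert, Finset.sum_singleton] <;>
  simp [rr12, rr13, rr14, rr23, rr24, rr34]

/-- Number of decompositions. -/
def cnt (x y : ℤ) (k : ℕ) : ℕ :=
  if 0 ≤ y ∧ y ≤ k then ((y + 2 - |k - y - x|) / 2).toNat else 0

lemma cond_iff (x y : ℤ) (k : ℕ) (m : {α // α ∈ rootsB 2} → ℕ) :
    ((∑ α, m α) = k ∧ (∑ α, (m α : ℚ) • (α : Fin 2 → ℚ)) = ![(x : ℚ), (y : ℚ)]) ↔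
    (m rr1 + (m rr2 + (m rr3 + m rr4)) = k ∧
      (m rr2 : ℤ) - m rr1 + m rr3 = x ∧ (m rr1 : ℤ) + m rr2 + m rr4 = y) := by
  rw [rr_sum, rr_sum]
  refine and_congr Iff.rfl ?_
  rw [funext_iff, Fin.forall_fin_two]
  simp only [rr1, rr2, rr3, rr4, Pi.add_apply, Pi.smul_apply, smul_eq_mul, Matrix.cons_val_zero,
    Matrix.cons_val_one]
  refine and_congr ?_ ?_
  · rw [← @Int.cast_inj ℚ]
    push_cast
    constructor <;> intro h <;> linarith
  · rw [← @Int.cast_inj ℚ]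
    push_cast
    constructor <;> intro h <;> linarith

open Classical in
lemma card_eq (x y : ℤ) (k : ℕ) :
    Nat.card {m : {α // α ∈ rootsB 2} → ℕ //
      (∑ α, m α) = k ∧ (∑ α, (m α : ℚ) • (α : Fin 2 → ℚ)) = ![(x : ℚ), (y : ℚ)]} = cnt x y k := by
  simp only [cond_iff]
  rw [← Nat.card_fin (cnt x y k)]
  symm
  let F : ℕ → {α // α ∈ rootsB 2} → ℕ := fun t α =>
    if α = rr1 then t + (k - y - x).toNat
    else if α = rr2 then t + (x + y - k).toNat
    else if α = rr3 then (k - y).toNat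
    else (y - (2 * t + |k - y - x|)).toNat
  have F1 : ∀ t, F t rr1 = t + (k - y - x).toNat := fun t => by simp [F]
  have F2 : ∀ t, F t rr2 = t + (x + y - k).toNat := fun t => by simp [F, rr12.symm]
  have F3 : ∀ t, F t rr3 = (k - y).toNat := fun t => by simp [F, rr13.symm, rr23.symm]
  have F4 : ∀ t, F t rr4 = (y - (2 * t + |k - y - x|)).toNat := fun t => by
    simp [F, rr14.symm, rr24.symm, rr34.symm]
  refine Nat.card_eq_of_bijective (fun t : Fin (cnt x y k) => ⟨F t, ?_⟩) ⟨?_, ?_⟩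
  · obtain ⟨t, ht⟩ := t
    simp only [F1, F2, F3, F4]
    unfold cnt at ht
    split_ifs at ht with h
    · rcases abs_cases ((k : ℤ) - y - x) with ⟨h1, h2⟩ | ⟨h1, h2⟩ <;> rw [h1] at ht ⊢ <;> omega
    · omega
  · intro s t h
    have h1 := congrFun (congrArg Subtype.val h) rr1
    simp only [F1] at h1
    ext
    omega
  · rintro ⟨m, h1, h2, h3⟩
    refine ⟨⟨min (m rr1) (m rr2), ?_⟩, ?_⟩
    · unfold cnt
      rw [if_pos (by omega)]
      rcases abs_cases ((k : ℤ) - y - x) with ⟨h1, h2⟩ | ⟨h1, h2⟩ <;> rw [h1] <;> omega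
    · ext α
      simp only
      rcases rr_cases α with rfl | rfl | rfl | rfl
      · rw [F1]; omega
      · rw [F2]; omega
      · rw [F3]; omega
      · rw [F4]
        rcases abs_cases ((k : ℤ) - y - x) with ⟨h1, h2⟩ | ⟨h1, h2⟩ <;> rw [h1] <;> omega

lemma coeff_kostant (x y : ℤ) (k : ℕ) (β : Fin 2 → ℚ) (hβ : β = ![(x : ℚ), (y : ℚ)]) :
    PowerSeries.coeff k (kostantQ (rootsB 2) β) = (cnt x y k : ℤ) := by
  subst hβ
  rw [kostantQ, PowerSeries.coeff_mk, card_eq]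

lemma coeff_KB (a b k : ℕ) :
    PowerSeries.coeff k (KB 2 ![(b : ℚ), (a : ℚ)] 0) =
      (cnt b a k : ℤ) - cnt (-b - 1) a k - cnt b (-a - 3) k + cnt (-b - 1) (-a - 3) k
      - cnt (a + 1) (b - 1) k + cnt (-a - 2) (b - 1) k + cnt (a + 1) (-b - 2) k
      - cnt (-a - 2) (-b - 2) k := by
  have hS : (Finset.univ : Finset (Equiv.Perm (Fin 2))) = {1, Equiv.swap 0 1} := by decide
  have hE : (Finset.univ : Finset (Fin 2 → Bool)) =
    {![false, false], ![true, false], ![false, true], ![true, true]} := by decide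
  have hne : (1 : Equiv.Perm (Fin 2)) ≠ Equiv.swap 0 1 := by decide
  have hsum : ∀ f : (Fin 2 → Bool) → PowerSeries ℤ, ∑ ε, f ε =
      f ![false, false] + (f ![true, false] + (f ![false, true] + f ![true, true])) := by
    intro f
    rw [hE, Finset.sum_insert (by decide), Finset.sum_insert (by decide),
      Finset.sum_insert (by decide), Finset.sum_singleton]
  rw [KB, hS, Finset.sum_pair hne, hsum, hsum]
  simp only [map_add, map_zsmul]
  rw [coeff_kostant b a k, coeff_kostant (-b - 1) a k, coeff_kostant b (-a - 3) k,
    coeff_kostant (-b - 1) (-a - 3) k, coeff_kostant (a + 1) (b - 1) k,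
    coeff_kostant (-a - 2) (b - 1) k, coeff_kostant (a + 1) (-b - 2) k,
    coeff_kostant (-a - 2) (-b - 2) k]
  · simp [wDet, Fin.prod_univ_two]
    ring
  all_goals
    ext i
    fin_cases i <;> simp [wAct, rhoB, Matrix.vecHead, Matrix.vecTail] <;> ring

lemma coeff_geom (n k : ℕ) :
    PowerSeries.coeff k (∑ t ∈ Finset.range n, (PowerSeries.X : PowerSeries ℤ) ^ t) =
      if k < n then 1 else 0 := by
  simp [map_sum, PowerSeries.coeff_X_pow]

lemma coeff_geom2 (n k : ℕ) :
    PowerSeries.coeff k (∑ t ∈ Finset.range n, (PowerSeries.X : PowerSeries ℤ) ^ (2 * t)) =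
      if k % 2 = 0 ∧ k < 2 * n then 1 else 0 := by
  induction n with
  | zero => simp
  | succ n ih =>
    rw [Finset.sum_range_succ, map_add, ih, PowerSeries.coeff_X_pow]
    split_ifs <;> omega

lemma coeff_prod (b s k : ℕ) :
    PowerSeries.coeff k ((∑ t ∈ Finset.range (2 * b + 1), (PowerSeries.X : PowerSeries ℤ) ^ t) *
      (∑ t ∈ Finset.range s, (PowerSeries.X : PowerSeries ℤ) ^ (2 * t))) =
      ((min s (k / 2 + 1) - (k + 1 - 2 * b) / 2 : ℕ) : ℤ) := by
  induction s with
  | zero => simp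
  | succ n ih =>
    rw [Finset.sum_range_succ _ n, mul_add, map_add, ih, PowerSeries.coeff_mul_X_pow', coeff_geom]
    split_ifs <;> omega

lemma cnt_neg (x y : ℤ) (k : ℕ) (hy : y < 0) : cnt x y k = 0 := by
  unfold cnt
  rw [if_neg (by omega)]

/-- Explicit formula for `K^{B_2}_{λ,0}(q)` where `λ = (a, b)`,
`a ≥ b ≥ 0` (here the weight is written with `e_1`-coordinate `b` and
`e_2`-coordinate `a`).  Geometric sums realize the polynomial quotients:
`(q^{2s} - 1)/(q² - 1) = ∑_{t<s} q^{2t}` and `(q^s - 1)/(q - 1) = ∑_{t<s} q^t`. -/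
theorem KB2_explicit (a b : ℕ) (hba : b ≤ a) :
    (Even (a + b) →
      KB 2 ![(b : ℚ), (a : ℚ)] 0 =
        (PowerSeries.X : PowerSeries ℤ) ^ a *
          ((∑ t ∈ Finset.range (b + 1), (PowerSeries.X : PowerSeries ℤ) ^ (2 * t)) +
            (PowerSeries.X : PowerSeries ℤ) ^ 2 *
              (∑ t ∈ Finset.range (2 * b + 1), (PowerSeries.X : PowerSeries ℤ) ^ t) *
              (∑ t ∈ Finset.range ((a - b) / 2), (PowerSeries.X : PowerSeries ℤ) ^ (2 * t)))) ∧
    (Odd (a + b) →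
      KB 2 ![(b : ℚ), (a : ℚ)] 0 =
        (PowerSeries.X : PowerSeries ℤ) ^ (a + 1) *
          (∑ t ∈ Finset.range (2 * b + 1), (PowerSeries.X : PowerSeries ℤ) ^ t) *
          (∑ t ∈ Finset.range ((a - b + 1) / 2), (PowerSeries.X : PowerSeries ℤ) ^ (2 * t))) := by
  have key : ∀ k : ℕ, PowerSeries.coeff k (KB 2 ![(b : ℚ), (a : ℚ)] 0) =
      (cnt b a k : ℤ) - cnt (-b - 1) a k - cnt (a + 1) (b - 1) k := by
    intro k
    have h0 : cnt (-a - 2) (b - 1) k = 0 := by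
      unfold cnt
      split_ifs with h
      · rw [abs_of_nonneg (by omega)]
        omega
      · rfl
    rw [coeff_KB, cnt_neg _ (-a - 3) k (by omega), cnt_neg _ (-a - 3) k (by omega),
      cnt_neg _ (-b - 2) k (by omega), cnt_neg _ (-b - 2) k (by omega), h0]
    push_cast
    ring
  have hC : ∀ k : ℕ, cnt (a + 1) (b - 1) k = if a < k then (b + 1 - (k - a - b) - (a + b - k)) / 2
      else (b + 1 - (a + b - k)) / 2 := by
    intro k
    unfold cnt
    rcases abs_cases ((k : ℤ) - (b - 1) - (a + 1)) with ⟨h1, h2⟩ | ⟨h1, h2⟩ <;> rw [h1] <;>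
      split_ifs <;> omega
  have hA : ∀ k : ℕ, cnt b a k = if k < a then 0 else
      (a + 2 - (k - a - b) - (a + b - k)) / 2 := by
    intro k
    unfold cnt
    rcases abs_cases ((k : ℤ) - a - b) with ⟨h1, h2⟩ | ⟨h1, h2⟩ <;> rw [h1] <;>
      split_ifs <;> omega
  have hB : ∀ k : ℕ, cnt (-b - 1) a k = if k < a then 0 else
      (a + 2 - (k + b + 1 - a)) / 2 := by
    intro k
    unfold cnt
    split_ifs
    · omega
    · rw [abs_of_nonneg (by omega)]
      omega
    · rfl
    · omega
  constructor
  · rintro ⟨r, hr⟩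
    ext k
    rw [key, PowerSeries.coeff_X_pow_mul', map_add, mul_assoc, PowerSeries.coeff_X_pow_mul',
      coeff_geom2, coeff_prod, hA, hB, hC]
    obtain ⟨e, rfl⟩ : ∃ e, a = b + 2 * e := ⟨(a - b) / 2, by omega⟩
    clear key hA hB hC
    by_cases hk : k < b + 2 * e
    · rw [if_pos hk, if_pos hk, if_neg (by omega), if_neg (by omega)]
      omega
    · obtain ⟨j, rfl⟩ : ∃ j, k = b + 2 * e + j := ⟨k - (b + 2 * e), by omega⟩
      rw [if_neg hk, if_neg hk, if_pos (by omega : b + 2 * e ≤ b + 2 * e + j)]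
      have h1 : (b + 2 * e - b) / 2 = e := by omega
      have h2 : b + 2 * e + j - (b + 2 * e) = j := by omega
      have h3 : b + 2 * e + b - (b + 2 * e + j) = b - j := by omega
      have h4 : b + 2 * e + j + b + 1 - (b + 2 * e) = j + b + 1 := by omega
      rw [h1, h2, h3, h4]
      have h5 : (if b + 2 * e < b + 2 * e + j then (b + 1 - (j - b) - (b - j)) / 2
        else (b + 1 - (b - j)) / 2) = (b + 1 - (j - b) - (b - j)) / 2 := by
        split_ifs <;> omega
      rw [h5]
      clear h1 h2 h3 h4 h5 hr hk hba
      rcases le_total j b with h | h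
      · have e1 : (b + 1 - (j - b) - (b - j)) / 2 = (j + 1) / 2 := by omega
        have e2 : (b + 2 * e + 2 - (j - b) - (b - j)) / 2 = e + 1 + j / 2 := by omega
        rw [e1, e2]
        clear e1 e2
        split_ifs <;> omega
      · have e1 : (b + 1 - (j - b) - (b - j)) / 2 = (2 * b + 1 - j) / 2 := by omega
        have e2 : (b + 2 * e + 2 - (j - b) - (b - j)) / 2 = (2 * b + 2 * e + 2 - j) / 2 := by omega
        rw [e1, e2]
        clear e1 e2
        split_ifs <;> omega
  · rintro ⟨r, hr⟩
    ext k
    rw [key, mul_assoc, PowerSeries.coeff_X_pow_mul', coeff_prod, hA, hB, hC]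
    obtain ⟨e, rfl⟩ : ∃ e, a = b + 2 * e + 1 := ⟨(a - b) / 2, by omega⟩
    clear key hA hB hC
    by_cases hk : k < b + 2 * e + 1
    · rw [if_pos hk, if_pos hk, if_neg (by omega), if_neg (by omega)]
      omega
    · obtain ⟨j, rfl⟩ : ∃ j, k = b + 2 * e + 1 + j := ⟨k - (b + 2 * e + 1), by omega⟩
      rw [if_neg hk, if_neg hk]
      have h1 : (b + 2 * e + 1 - b + 1) / 2 = e + 1 := by omega
      have h2 : b + 2 * e + 1 + j - (b + 2 * e + 1) = j := by omega
      have h2' : b + 2 * e + 1 + j - (b + 2 * e + 1 + 1) = j - 1 := by omega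
      have h3 : b + 2 * e + 1 + b - (b + 2 * e + 1 + j) = b - j := by omega
      have h4 : b + 2 * e + 1 + j + b + 1 - (b + 2 * e + 1) = j + b + 1 := by omega
      rw [h1, h2, h2', h3, h4]
      have h5 : (if b + 2 * e + 1 < b + 2 * e + 1 + j then (b + 1 - (j - b) - (b - j)) / 2
        else (b + 1 - (b - j)) / 2) = (b + 1 - (j - b) - (b - j)) / 2 := by
        split_ifs <;> omega
      rw [h5]
      clear h1 h2 h2' h3 h4 h5 hr hk hba
      rcases le_total j b with h | h
      · have e1 : (b + 1 - (j - b) - (b - j)) / 2 = (j + 1) / 2 := by omega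
        have e2 : (b + 2 * e + 1 + 2 - (j - b) - (b - j)) / 2 = e + 1 + (j + 1) / 2 := by omega
        rw [e1, e2]
        clear e1 e2
        split_ifs <;> omega
      · have e1 : (b + 1 - (j - b) - (b - j)) / 2 = (2 * b + 1 - j) / 2 := by omega
        have e2 : (b + 2 * e + 1 + 2 - (j - b) - (b - j)) / 2 = (2 * b + 2 * e + 3 - j) / 2 := by
          omega
        rw [e1, e2]
        clear e1 e2
        split_ifs <;> omega
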